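/- arXiv:1806.00279 — 2 statements merged into one kernel-verified Lean document; each statement's English description precedes it below -/
import Mathlib

section
/- For q ≥ 5 and k ≥ 2, 2·(1 + 3/q)·((q^k − 1)/(q − 1))·((q^{k−1} − 1)/(q^{2k−1} − 1)) < 1. -/
/-!
For `x ≥ 1` we have `(x ^ m - 1) * (x ^ n - 1) ≤ x ^ (m + n) - 1`, because the difference of the
two sides is `(x ^ m - 1) + (x ^ n - 1)`. With `m = k` and `n = k - 1`, this bounds the left-hand
side of the inequality by `2 * (1 + 3 / q) / (q - 1)`, which no longer depends on `k` and is less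
than `1` as soon as `q ≥ 5`.
-/

theorem pow_sub_one_mul_pow_sub_one_le {R : Type*} [Ring R] [PartialOrder R] [IsOrderedRing R]
    {x : R} (hx : 1 ≤ x) (m n : ℕ) : (x ^ m - 1) * (x ^ n - 1) ≤ x ^ (m + n) - 1 := by
  have hm : 0 ≤ x ^ m - 1 := sub_nonneg.2 (one_le_pow₀ hx)
  have hn : 0 ≤ x ^ n - 1 := sub_nonneg.2 (one_le_pow₀ hx)
  calc (x ^ m - 1) * (x ^ n - 1)
      = x ^ (m + n) - 1 - ((x ^ m - 1) + (x ^ n - 1)) := by rw [pow_add]; noncomm_ring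
    _ ≤ x ^ (m + n) - 1 := sub_le_self _ (add_nonneg hm hn)

section OrderedField

variable {K : Type*} [Field K] [LinearOrder K] [IsStrictOrderedRing K] {c x : K} {m n : ℕ}

theorem mul_pow_sub_one_div_mul_pow_sub_one_div_lt_one (hc : 0 ≤ c) (hcx : c < x - 1)
    (hmn : m + n ≠ 0) :
    c * ((x ^ m - 1) / (x - 1)) * ((x ^ n - 1) / (x ^ (m + n) - 1)) < 1 := by
  have hx : 0 < x - 1 := hc.trans_lt hcx
  have hpow : 0 < x ^ (m + n) - 1 := sub_pos.2 (one_lt_pow₀ (sub_pos.1 hx) hmn)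
  calc c * ((x ^ m - 1) / (x - 1)) * ((x ^ n - 1) / (x ^ (m + n) - 1))
      = c * ((x ^ m - 1) * (x ^ n - 1)) / ((x - 1) * (x ^ (m + n) - 1)) := by
        rw [mul_assoc, div_mul_div_comm, ← mul_div_assoc]
    _ ≤ c * (x ^ (m + n) - 1) / ((x - 1) * (x ^ (m + n) - 1)) := by
        gcongr
        exact pow_sub_one_mul_pow_sub_one_le (sub_pos.1 hx).le m n
    _ = c / (x - 1) := mul_div_mul_right _ _ hpow.ne'
    _ < 1 := (div_lt_one hx).2 hcx

theorem two_mul_one_add_three_div_lt_sub_one (hx : 5 ≤ x) : 2 * (1 + 3 / x) < x - 1 := by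
  calc 2 * (1 + 3 / x) ≤ 2 * (1 + 3 / 5) := by gcongr
    _ < 5 - 1 := by norm_num
    _ ≤ x - 1 := by gcongr

theorem section4_first_inequality_general (hx : 5 ≤ x) (hmn : m + n ≠ 0) :
    2 * (1 + 3 / x) * ((x ^ m - 1) / (x - 1)) * ((x ^ n - 1) / (x ^ (m + n) - 1)) < 1 := by
  have hc : 0 ≤ 2 * (1 + 3 / x) := by
    have : 0 < x := by linarith
    positivity
  exact mul_pow_sub_one_div_mul_pow_sub_one_div_lt_one hc
    (two_mul_one_add_three_div_lt_sub_one hx) hmn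

end OrderedField

/-- The Section 4 inequality `2f < [2k-1 choose k-1]_q`: for integers `q ≥ 5`, `k ≥ 2`,
`2·(1 + 3/q)·((q^k-1)/(q-1))·((q^{k-1}-1)/(q^{2k-1}-1)) < 1`. -/
theorem section4_first_inequality (q k : ℕ) (hq : 5 ≤ q) (hk : 2 ≤ k) :
    2 * (1 + 3 / (q : ℚ)) * (((q : ℚ) ^ k - 1) / ((q : ℚ) - 1)) *
      (((q : ℚ) ^ (k - 1) - 1) / ((q : ℚ) ^ (2 * k - 1) - 1)) < 1 := by
  rw [show 2 * k - 1 = k + (k - 1) by lia]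
  exact section4_first_inequality_general (by exact_mod_cast hq) (by lia)
end

section
/- Let q ≥ 3, k ≥ 5, and let Y be an intersecting family of k-dimensional subspaces of F_q^{2k} with |Y| ≥ (1 + 3q^{−1})·[k choose 1]_q·[2k−2 choose k−2]_q, where Y is not contained in a dictator or the dual of a dictator. Then no point (1-dimensional subspace) of F_q^{2k} lies in more than (q^{3−k}·[k choose 1]_q + 1)·[2k−2 choose k−2]_q members of Y. -/
/-- The Gaussian binomial coefficient `[n choose k]_q`. -/
def gaussBinom (q n k : ℕ) : ℚ :=
  ∏ i ∈ Finset.range k, ((q : ℚ) ^ (n - i) - 1) / ((q : ℚ) ^ (i + 1) - 1)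

/-!
Let `A` be the set of members of `Y` through the point `p`, and `Z` the set of the others. In the
quotient by `p`, a space of dimension `2 * k - 1`, the members of `A` become distinct
`(k - 1)`-spaces and those of `Z` become `k`-spaces, each `k`-space arising from at most `q ^ k`
members of `Z`; the two families of images are cross-intersecting.

* Subspaces of a fixed dimension are the blocks of a `2`-design on the points. If every member of
  `A` meets every member of `Z`, then the degrees of `A` and `Z` are correlated, and a variance
  (expander mixing) estimate bounds the product of the sizes. It replaces Tokushige's theorem at
  the cost of a factor `((q - 1) / (q - 2)) ^ 2`.
* Since `Z` is nonempty, the members of `A` all meet the image of some `T ∈ Z`, hence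
  `#A ≤ [k choose 1] * [2k-2 choose k-2]`.

If `#A` exceeded the claimed bound `c`, then by the second estimate it would lie between `c` and
`#Y - c`, so by concavity `#A * #Z` would be at least `c * (#Y - c)`, which is more than the first
estimate allows.
-/

open Finset Module

section GaussBinom

variable {q n k : ℕ}

theorem gaussBinom_zero_right (q n : ℕ) : gaussBinom q n 0 = 1 := by simp [gaussBinom]

theorem gaussBinom_one_right (q n : ℕ) :
    gaussBinom q n 1 = ((q : ℚ) ^ n - 1) / ((q : ℚ) - 1) := by
  simp [gaussBinom]

theorem gaussBinom_succ_right (q n k : ℕ) : gaussBinom q n (k + 1) =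
    gaussBinom q n k * (((q : ℚ) ^ (n - k) - 1) / ((q : ℚ) ^ (k + 1) - 1)) :=
  prod_range_succ _ k

theorem gaussBinom_succ_right_eq_pred_mul (q n k : ℕ) : gaussBinom q n (k + 1) =
    gaussBinom q (n - 1) k * (((q : ℚ) ^ n - 1) / ((q : ℚ) ^ (k + 1) - 1)) := by
  simp only [gaussBinom, prod_div_distrib]
  rw [prod_range_succ', prod_range_succ (fun i ↦ (q : ℚ) ^ (i + 1) - 1), Nat.sub_zero,
    div_mul_div_comm]
  simp only [Nat.sub_sub, add_comm 1]

theorem cast_pow_sub_one_pos (hq : 1 < q) (hn : n ≠ 0) : (0 : ℚ) < (q : ℚ) ^ n - 1 :=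
  sub_pos.2 (one_lt_pow₀ (mod_cast hq) hn)

theorem gaussBinom_pos (hq : 1 < q) (hkn : k ≤ n) : 0 < gaussBinom q n k := by
  refine prod_pos fun i hi ↦ div_pos ?_ (cast_pow_sub_one_pos hq i.succ_ne_zero)
  exact cast_pow_sub_one_pos hq (Nat.sub_ne_zero_of_lt ((mem_range.1 hi).trans_le hkn))

theorem gaussBinom_nonneg (hq : 1 < q) : 0 ≤ gaussBinom q n k := by
  have hpow (m : ℕ) : (0 : ℚ) ≤ (q : ℚ) ^ m - 1 := sub_nonneg.2 (one_le_pow₀ (mod_cast hq.le))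
  exact prod_nonneg fun i _ ↦ div_nonneg (hpow _) (hpow _)

theorem gaussBinom_one_mul_gaussBinom_one_le {a b : ℕ} (hq : 1 < q) (hab : a + b ≤ n) :
    gaussBinom q a 1 * gaussBinom q b 1 ≤ gaussBinom q n 1 / (q - 1) := by
  have hq1 : (1 : ℚ) < q := mod_cast hq
  have ha : (1 : ℚ) ≤ (q : ℚ) ^ a := one_le_pow₀ hq1.le
  have hb : (1 : ℚ) ≤ (q : ℚ) ^ b := one_le_pow₀ hq1.le
  have hn : (q : ℚ) ^ a * (q : ℚ) ^ b ≤ (q : ℚ) ^ n := by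
    rw [← pow_add]; exact pow_le_pow_right₀ hq1.le hab
  have : 0 < (q : ℚ) - 1 := sub_pos.2 hq1
  simp only [gaussBinom_one_right, div_mul_div_comm, div_div]
  gcongr
  linarith

theorem pow_mul_gaussBinom_two_mul_sub_two (hq : 1 < q) (hk : 2 ≤ k) :
    (q : ℚ) ^ k * gaussBinom q (2 * k - 2) (k - 1) =
      (q - 1) * gaussBinom q k 1 * ((q : ℚ) ^ k * q / ((q : ℚ) ^ k - q)) *
        gaussBinom q (2 * k - 2) (k - 2) := by
  obtain ⟨m, rfl⟩ := Nat.exists_eq_add_of_le' hk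
  have hexp : 2 * (m + 2) - 2 - m = m + 2 := by omega
  have hq1 : (q : ℚ) - 1 ≠ 0 := by simpa using (cast_pow_sub_one_pos hq one_ne_zero).ne'
  have hm : (q : ℚ) ^ (m + 1) - 1 ≠ 0 := (cast_pow_sub_one_pos hq m.succ_ne_zero).ne'
  have hq0 : (q : ℚ) ≠ 0 := by positivity
  have hfactor : (q : ℚ) ^ (m + 2) - q = q * ((q : ℚ) ^ (m + 1) - 1) := by ring
  rw [show m + 2 - 1 = m + 1 by omega, Nat.add_sub_cancel, gaussBinom_succ_right, hexp,
    gaussBinom_one_right, hfactor]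
  field_simp

end GaussBinom

/-- `2`-designs with point set `P`, block set `𝓑` and incidence relation `I`: every block contains
`κ` points, every point lies on `r` blocks and any two distinct points lie on `l` common blocks.
The parameters are rational because they are going to be Gaussian binomial coefficients; their
nonnegativity is a requirement only if `P` has at most one point. -/
structure IsTwoDesign {α β : Type*} (I : α → β → Prop) [DecidableRel I] (P : Finset α)
    (𝓑 : Finset β) (κ r l : ℚ) : Prop where
  card_points (B : β) (hB : B ∈ 𝓑) : (#(P.bipartiteBelow I B) : ℚ) = κ
  card_blocks (x : α) (hx : x ∈ P) : (#(𝓑.bipartiteAbove I x) : ℚ) = r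
  card_blocks_pair (x : α) (hx : x ∈ P) (y : α) (hy : y ∈ P) (hxy : x ≠ y) :
    (#((𝓑.bipartiteAbove I x).bipartiteAbove I y) : ℚ) = l
  nonneg_r : 0 ≤ r
  nonneg_l : 0 ≤ l

/-- The discrepancy of a set `A` of blocks of size `κ` at the point `x`: the degree of `x` in `A`
minus the average degree of a point of `P`. -/
def discrepancy {α β : Type*} (I : α → β → Prop) [DecidableRel I] (P : Finset α) (κ : ℚ)
    (A : Finset β) (x : α) : ℚ :=
  #(A.bipartiteAbove I x) - κ * #A / #P

section TwoDesign

variable {α β γ : Type*} {I : α → β → Prop} [DecidableRel I] {J : α → γ → Prop} [DecidableRel J]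
  {P : Finset α} {𝓑 A : Finset β} {𝓒 C : Finset γ} {κ r l κ' r' l' : ℚ}

theorem card_mul_card_le_sum_degree_mul_degree
    (hmeet : ∀ B ∈ A, ∀ D ∈ C, ∃ x ∈ P, I x B ∧ J x D) :
    #A * #C ≤ ∑ x ∈ P, #(A.bipartiteAbove I x) * #(C.bipartiteAbove J x) := by
  calc #A * #C = ∑ B ∈ A, ∑ D ∈ C, 1 := by simp
    _ ≤ ∑ B ∈ A, ∑ D ∈ C, #((P.bipartiteBelow I B).bipartiteBelow J D) := by
      refine sum_le_sum fun B hB ↦ sum_le_sum fun D hD ↦ card_pos.2 ?_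
      obtain ⟨x, hx, hxB, hxD⟩ := hmeet B hB D hD
      exact ⟨x, by simp [hx, hxB, hxD]⟩
    _ = ∑ B ∈ A, ∑ x ∈ P.bipartiteBelow I B, #(C.bipartiteAbove J x) := by
      simp only [sum_card_bipartiteAbove_eq_sum_card_bipartiteBelow]
    _ = ∑ x ∈ P, #(A.bipartiteAbove I x) * #(C.bipartiteAbove J x) := by
      simp only [← sum_sum_bipartiteAbove_eq_sum_sum_bipartiteBelow, sum_const, smul_eq_mul]

namespace IsTwoDesign

theorem sum_sq_sum_points (h : IsTwoDesign I P 𝓑 κ r l) {f : α → ℚ} (hf : ∑ x ∈ P, f x = 0) :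
    ∑ B ∈ 𝓑, (∑ x ∈ P.bipartiteBelow I B, f x) ^ 2 = (r - l) * ∑ x ∈ P, f x ^ 2 := by
  classical
  have hpair (x : α) (hx : x ∈ P) (y : α) (hy : y ∈ P) :
      (#((𝓑.bipartiteAbove I x).bipartiteAbove I y) : ℚ) = l + if y = x then r - l else 0 := by
    split_ifs with hyx
    · subst hyx
      rw [add_sub_cancel, ← h.card_blocks y hy]
      simp [bipartiteAbove, filter_filter]
    · rw [add_zero, h.card_blocks_pair x hx y hy (Ne.symm hyx)]
  calc ∑ B ∈ 𝓑, (∑ x ∈ P.bipartiteBelow I B, f x) ^ 2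
      = ∑ B ∈ 𝓑, ∑ x ∈ P.bipartiteBelow I B, f x * ∑ y ∈ P.bipartiteBelow I B, f y := by
        simp only [sq, sum_mul]
    _ = ∑ x ∈ P, f x * ∑ B ∈ 𝓑.bipartiteAbove I x, ∑ y ∈ P.bipartiteBelow I B, f y := by
        simp only [← sum_sum_bipartiteAbove_eq_sum_sum_bipartiteBelow, mul_sum]
    _ = ∑ x ∈ P, f x * ∑ y ∈ P, #((𝓑.bipartiteAbove I x).bipartiteAbove I y) * f y := by
        simp only [← sum_sum_bipartiteAbove_eq_sum_sum_bipartiteBelow, sum_const, nsmul_eq_mul]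
    _ = ∑ x ∈ P, f x * ((r - l) * f x) := by
        refine sum_congr rfl fun x hx ↦ ?_
        rw [sum_congr rfl fun y hy ↦ by rw [hpair x hx y hy]]
        simp [add_mul, sum_add_distrib, ← mul_sum, hf, ite_mul, hx]
    _ = (r - l) * ∑ x ∈ P, f x ^ 2 := by
        rw [mul_sum]
        exact sum_congr rfl fun x _ ↦ by ring

theorem sum_discrepancy (h : IsTwoDesign I P 𝓑 κ r l) (hA : A ⊆ 𝓑) :
    ∑ x ∈ P, discrepancy I P κ A x = 0 := by
  obtain rfl | hP := P.eq_empty_or_nonempty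
  · simp
  have hcount : ∑ x ∈ P, (#(A.bipartiteAbove I x) : ℚ) = #A * κ := by
    rw [← Nat.cast_sum, sum_card_bipartiteAbove_eq_sum_card_bipartiteBelow, Nat.cast_sum,
      sum_congr rfl fun B hB ↦ h.card_points B (hA hB), sum_const, nsmul_eq_mul]
  have hP0 : (#P : ℚ) ≠ 0 := mod_cast hP.card_ne_zero
  simp only [discrepancy, sum_sub_distrib, hcount, sum_const, nsmul_eq_mul]
  field_simp
  ring

theorem sum_sq_discrepancy_le (h : IsTwoDesign I P 𝓑 κ r l) (hA : A ⊆ 𝓑) :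
    ∑ x ∈ P, discrepancy I P κ A x ^ 2 ≤ r * #A := by
  set f := discrepancy I P κ A with hf
  have hf0 : ∑ x ∈ P, f x = 0 := h.sum_discrepancy hA
  have hsq : ∑ x ∈ P, f x ^ 2 = ∑ B ∈ A, ∑ x ∈ P.bipartiteBelow I B, f x := by
    calc ∑ x ∈ P, f x ^ 2
        = ∑ x ∈ P, (#(A.bipartiteAbove I x) * f x - κ * #A / #P * f x) :=
          sum_congr rfl fun x _ ↦ by rw [hf, discrepancy]; ring
      _ = ∑ x ∈ P, ∑ _B ∈ A.bipartiteAbove I x, f x := by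
          simp [sum_sub_distrib, ← mul_sum, hf0]
      _ = _ := sum_sum_bipartiteAbove_eq_sum_sum_bipartiteBelow ..
  have hS : 0 ≤ ∑ x ∈ P, f x ^ 2 := sum_nonneg fun x _ ↦ sq_nonneg _
  have hcs : (∑ x ∈ P, f x ^ 2) ^ 2 ≤ #A * ((r - l) * ∑ x ∈ P, f x ^ 2) := by
    calc (∑ x ∈ P, f x ^ 2) ^ 2
        ≤ #A * ∑ B ∈ A, (∑ x ∈ P.bipartiteBelow I B, f x) ^ 2 := by
          rw [hsq]; exact sq_sum_le_card_mul_sum_sq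
      _ ≤ #A * ∑ B ∈ 𝓑, (∑ x ∈ P.bipartiteBelow I B, f x) ^ 2 := by
          gcongr
      _ = _ := by rw [h.sum_sq_sum_points hf0]
  obtain hS0 | hS0 := hS.eq_or_lt
  · rw [← hS0]
    exact mul_nonneg h.nonneg_r (Nat.cast_nonneg _)
  · refine le_of_mul_le_mul_right ?_ hS0
    nlinarith [mul_nonneg (mul_nonneg h.nonneg_l hS) (Nat.cast_nonneg' (α := ℚ) #A)]

theorem sum_degree_mul_degree (h : IsTwoDesign I P 𝓑 κ r l) (h' : IsTwoDesign J P 𝓒 κ' r' l')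
    (hA : A ⊆ 𝓑) (hC : C ⊆ 𝓒) :
    ∑ x ∈ P, (#(A.bipartiteAbove I x) : ℚ) * #(C.bipartiteAbove J x) =
      κ * κ' / #P * (#A * #C) + ∑ x ∈ P, discrepancy I P κ A x * discrepancy J P κ' C x := by
  set f := discrepancy I P κ A with hf
  set g := discrepancy J P κ' C with hg
  have hf0 : ∑ x ∈ P, f x = 0 := h.sum_discrepancy hA
  have hg0 : ∑ x ∈ P, g x = 0 := h'.sum_discrepancy hC
  set μ := κ * #A / #P with hμ
  set ν := κ' * #C / #P with hν
  have hmean : μ * (#P * ν) = κ * κ' / #P * (#A * #C) := by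
    obtain hP | hP := eq_or_ne (#P : ℚ) 0
    · simp [hP]
    · rw [hμ, hν]; field_simp
  have hexpand (x : α) : (#(A.bipartiteAbove I x) : ℚ) * #(C.bipartiteAbove J x) =
      μ * ν + ν * f x + μ * g x + f x * g x := by
    simp only [hf, hg, discrepancy, ← hμ, ← hν]; ring
  simp only [hexpand, sum_add_distrib, ← mul_sum, hf0, hg0, sum_const, nsmul_eq_mul, hmean,
    mul_zero, add_zero]

theorem card_mul_card_le_of_forall_exists (h : IsTwoDesign I P 𝓑 κ r l)
    (h' : IsTwoDesign J P 𝓒 κ' r' l') (hA : A ⊆ 𝓑) (hC : C ⊆ 𝓒) {δ : ℚ} (hδ : 0 ≤ δ)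
    (hκ : δ ≤ 1 - κ * κ' / #P) (hmeet : ∀ B ∈ A, ∀ D ∈ C, ∃ x ∈ P, I x B ∧ J x D) :
    δ ^ 2 * (#A * #C) ≤ r * r' := by
  have hr := h.nonneg_r
  have hr' := h'.nonneg_r
  have hflags : (#A * #C : ℚ) ≤
      ∑ x ∈ P, (#(A.bipartiteAbove I x) : ℚ) * #(C.bipartiteAbove J x) :=
    mod_cast card_mul_card_le_sum_degree_mul_degree hmeet
  set S := ∑ x ∈ P, discrepancy I P κ A x * discrepancy J P κ' C x
  have hlow : δ * (#A * #C) ≤ S := by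
    rw [h.sum_degree_mul_degree h' hA hC] at hflags
    nlinarith [mul_le_mul_of_nonneg_right hκ (by positivity : 0 ≤ (#A * #C : ℚ))]
  have hup : S ^ 2 ≤ r * #A * (r' * #C) :=
    (sum_mul_sq_le_sq_mul_sq ..).trans <| mul_le_mul (h.sum_sq_discrepancy_le hA)
      (h'.sum_sq_discrepancy_le hC) (sum_nonneg fun _ _ ↦ sq_nonneg _) (by positivity)
  have hsq : (δ * (#A * #C)) ^ 2 ≤ r * #A * (r' * #C) := (by gcongr : _ ≤ S ^ 2).trans hup
  obtain h0 | h0 := (by positivity : 0 ≤ (#A * #C : ℚ)).eq_or_lt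
  · rw [← h0, mul_zero]; positivity
  · exact le_of_mul_le_mul_right (by linarith) h0

end IsTwoDesign

end TwoDesign

section Subspaces

variable {K V : Type*} [Field K] [AddCommGroup V] [Module K V]

/-- Cross-intersecting families of subspaces: every member of `A` meets every member of `B`
nontrivially, the trivial meet being expressed by `Disjoint`. -/
def CrossIntersecting (A B : Finset (Submodule K V)) : Prop :=
  ∀ R ∈ A, ∀ S ∈ B, ¬Disjoint R S

variable [Module.Finite K V]

theorem finrank_sup_of_ne {x y : Submodule K V} (hx : finrank K x = 1) (hy : finrank K y = 1)
    (hxy : x ≠ y) : finrank K (x ⊔ y : Submodule K V) = 2 := by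
  have hdisj := (Submodule.isAtom_iff_finrank_eq_one.2 hx).disjoint_of_ne
    (Submodule.isAtom_iff_finrank_eq_one.2 hy) hxy
  have := Submodule.finrank_sup_add_finrank_inf_eq x y
  rwa [hdisj.eq_bot, finrank_bot, hx, hy] at this

variable [Finite K]

theorem ncard_diff_eq_pow_sub_pow {L R : Submodule K V} (hLR : L ≤ R) :
    (((R : Set V) \ L).ncard : ℚ) =
      (Nat.card K : ℚ) ^ finrank K R - (Nat.card K : ℚ) ^ finrank K L := by
  have := Module.finite_of_finite K (M := V)
  have hcard (X : Submodule K V) : (X : Set V).ncard = Nat.card K ^ finrank K X :=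
    Module.natCard_eq_pow_finrank (K := K) (V := X)
  rw [eq_sub_iff_add_eq]
  have hsub := SetLike.coe_subset_coe.2 hLR
  exact mod_cast hcard R ▸ hcard L ▸ Set.ncard_sdiff_add_ncard_of_subset hsub

/-- The finite set of subspaces of dimension `e` lying between `L` and `R`. -/
noncomputable def subspacesIcc (L R : Submodule K V) (e : ℕ) : Finset (Submodule K V) :=
  have := Module.finite_of_finite K (M := V)
  (Set.toFinite {X | (L ≤ X ∧ X ≤ R) ∧ finrank K X = e}).toFinset

@[simp]
theorem mem_subspacesIcc {L R X : Submodule K V} {e : ℕ} :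
    X ∈ subspacesIcc L R e ↔ (L ≤ X ∧ X ≤ R) ∧ finrank K X = e := by
  simp [subspacesIcc]

open scoped Classical in
theorem filter_mem_subspacesIcc (L R : Submodule K V) (e : ℕ) (v : V) :
    {X ∈ subspacesIcc L R e | v ∈ X} = subspacesIcc (L ⊔ Submodule.span K {v}) R e := by
  ext X
  simp only [mem_filter, mem_subspacesIcc, sup_le_iff, Submodule.span_singleton_le_iff_mem]
  tauto

theorem card_subspacesIcc_mul {L R : Submodule K V} (hLR : L ≤ R) (e : ℕ) {N : ℚ}
    (hN : ∀ v ∈ R, v ∉ L → #(subspacesIcc (L ⊔ Submodule.span K {v}) R e) = N) :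
    #(subspacesIcc L R e) * ((Nat.card K : ℚ) ^ e - (Nat.card K : ℚ) ^ finrank K L) =
      ((Nat.card K : ℚ) ^ finrank K R - (Nat.card K : ℚ) ^ finrank K L) * N := by
  classical
  have := Module.finite_of_finite K (M := V)
  let D : Finset V := (Set.toFinite ((R : Set V) \ L)).toFinset
  have hD : (#D : ℚ) = (Nat.card K : ℚ) ^ finrank K R - (Nat.card K : ℚ) ^ finrank K L := by
    rw [← ncard_diff_eq_pow_sub_pow hLR, Set.ncard_eq_toFinset_card]
  have hX (X) (hX : X ∈ subspacesIcc L R e) : (#{v ∈ D | v ∈ X} : ℚ) =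
      (Nat.card K : ℚ) ^ e - (Nat.card K : ℚ) ^ finrank K L := by
    obtain ⟨⟨hLX, hXR⟩, rfl⟩ := mem_subspacesIcc.1 hX
    rw [← ncard_diff_eq_pow_sub_pow hLX, Set.ncard_eq_toFinset_card]
    congr 2
    ext v
    have := @hXR v
    simp [D]
    tauto
  have hv (v) (hv : v ∈ D) : (#{X ∈ subspacesIcc L R e | v ∈ X} : ℚ) = N := by
    simp only [D, Set.Finite.mem_toFinset, Set.mem_sdiff, SetLike.mem_coe] at hv
    rw [filter_mem_subspacesIcc, hN v hv.1 hv.2]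
  have hcount := sum_card_bipartiteAbove_eq_sum_card_bipartiteBelow
    (fun (v : V) (X : Submodule K V) ↦ v ∈ X) (s := D) (t := subspacesIcc L R e)
  rw [← hD, ← nsmul_eq_mul, ← nsmul_eq_mul, ← sum_const, ← sum_const, ← sum_congr rfl hX,
    ← sum_congr rfl hv]
  exact mod_cast hcount.symm

theorem card_subspacesIcc {L R : Submodule K V} (hLR : L ≤ R) {e : ℕ} (he : finrank K L ≤ e) :
    (#(subspacesIcc L R e) : ℚ) =
      gaussBinom (Nat.card K) (finrank K R - finrank K L) (e - finrank K L) := by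
  obtain ⟨j, rfl⟩ := Nat.exists_eq_add_of_le he
  rw [Nat.add_sub_cancel_left]
  induction j generalizing L with
  | zero =>
    have : subspacesIcc L R (finrank K L + 0) = {L} := by
      ext X
      simp only [mem_subspacesIcc, mem_singleton]
      refine ⟨fun h ↦ (Submodule.eq_of_le_of_finrank_eq h.1.1 h.2.symm).symm, ?_⟩
      rintro rfl
      exact ⟨⟨le_rfl, hLR⟩, rfl⟩
    rw [this, gaussBinom_zero_right, card_singleton, Nat.cast_one]
  | succ j ih =>
    have hfiber (v) (hvR : v ∈ R) (hvL : v ∉ L) :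
        (#(subspacesIcc (L ⊔ Submodule.span K {v}) R (finrank K L + (j + 1))) : ℚ) =
          gaussBinom (Nat.card K) (finrank K R - finrank K L - 1) j := by
      have hrank := Submodule.finrank_sup_span_singleton hvL
      have hle := sup_le hLR ((Submodule.span_singleton_le_iff_mem v R).2 hvR)
      have := ih hle (by omega)
      rwa [hrank, ← Nat.sub_sub, add_assoc, add_comm 1] at this
    have hcount := card_subspacesIcc_mul hLR _ hfiber
    have hden := cast_pow_sub_one_pos (n := j + 1) (Finite.one_lt_card (α := K)) (by omega)
    have hpow : (0 : ℚ) < (Nat.card K : ℚ) ^ finrank K L := by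
      have := Nat.card_pos (α := K)
      positivity
    rw [gaussBinom_succ_right_eq_pred_mul, mul_div_assoc', eq_div_iff hden.ne']
    refine mul_left_cancel₀ hpow.ne' ?_
    obtain ⟨m, hm⟩ := Nat.exists_eq_add_of_le (Submodule.finrank_mono hLR)
    rw [hm, Nat.add_sub_cancel_left] at hcount ⊢
    rw [pow_add, pow_add] at hcount
    linear_combination hcount

open scoped Classical in
/- The `if` guards against `a = 1`, where truncated subtraction turns the Gaussian binomial
coefficient into `1`. -/
theorem isTwoDesign_subspaces {a : ℕ} (ha : 1 ≤ a) :
    IsTwoDesign (· ≤ ·) (subspacesIcc (⊥ : Submodule K V) ⊤ 1) (subspacesIcc ⊥ ⊤ a)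
      (gaussBinom (Nat.card K) a 1)
      (gaussBinom (Nat.card K) (finrank K V - 1) (a - 1))
      (if 2 ≤ a then gaussBinom (Nat.card K) (finrank K V - 2) (a - 2) else 0) where
  card_points B hB := by
    have : (subspacesIcc ⊥ ⊤ 1).bipartiteBelow (· ≤ ·) B = subspacesIcc ⊥ B 1 := by
      ext; simp [and_comm]
    rw [this, card_subspacesIcc bot_le (by simp), (mem_subspacesIcc.1 hB).2, finrank_bot,
      Nat.sub_zero]
  card_blocks x hx := by
    have : (subspacesIcc ⊥ ⊤ a).bipartiteAbove (· ≤ ·) x = subspacesIcc x ⊤ a := by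
      ext; simp [and_comm]
    have hx1 := (mem_subspacesIcc.1 hx).2
    rw [this, card_subspacesIcc le_top (hx1.trans_le ha), hx1, finrank_top]
  card_blocks_pair x hx y hy hxy := by
    have : ((subspacesIcc ⊥ ⊤ a).bipartiteAbove (· ≤ ·) x).bipartiteAbove (· ≤ ·) y =
        subspacesIcc (x ⊔ y) ⊤ a := by
      ext; simp; tauto
    have hrank := finrank_sup_of_ne (mem_subspacesIcc.1 hx).2 (mem_subspacesIcc.1 hy).2 hxy
    rw [this]
    split_ifs with ha2
    · rw [card_subspacesIcc le_top (hrank.trans_le ha2), hrank, finrank_top]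
    · rw [Nat.cast_eq_zero, card_eq_zero, eq_empty_iff_forall_notMem]
      intro X hX
      obtain ⟨⟨hle, -⟩, rfl⟩ := mem_subspacesIcc.1 hX
      exact ha2 (hrank.symm.trans_le (Submodule.finrank_mono hle))
  nonneg_r := gaussBinom_nonneg Finite.one_lt_card
  nonneg_l := by
    split_ifs
    exacts [gaussBinom_nonneg Finite.one_lt_card, le_rfl]

theorem exists_point_le_of_not_disjoint {R S : Submodule K V} (h : ¬Disjoint R S) :
    ∃ x ∈ subspacesIcc (⊥ : Submodule K V) ⊤ 1, x ≤ R ∧ x ≤ S := by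
  obtain ⟨x, hx, hxRS⟩ := (eq_bot_or_exists_atom_le (R ⊓ S)).resolve_left (mt disjoint_iff.2 h)
  exact ⟨x, by simpa using Submodule.isAtom_iff_finrank_eq_one.1 hx, le_inf_iff.1 hxRS⟩

theorem CrossIntersecting.card_mul_card_le {A B : Finset (Submodule K V)}
    (h : CrossIntersecting A B) {a b : ℕ} (ha : 1 ≤ a) (hb : 1 ≤ b) (hab : a + b ≤ finrank K V)
    (hA : ∀ R ∈ A, finrank K R = a) (hB : ∀ S ∈ B, finrank K S = b) :
    ((Nat.card K : ℚ) - 2) ^ 2 * (#A * #B) ≤ ((Nat.card K : ℚ) - 1) ^ 2 *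
      (gaussBinom (Nat.card K) (finrank K V - 1) (a - 1) *
        gaussBinom (Nat.card K) (finrank K V - 1) (b - 1)) := by
  classical
  have hq := Finite.one_lt_card (α := K)
  have hq2 : (2 : ℚ) ≤ Nat.card K := mod_cast hq
  have hpos : 0 < (Nat.card K : ℚ) - 1 := by linarith
  have hpoints : (#(subspacesIcc (⊥ : Submodule K V) ⊤ 1) : ℚ) =
      gaussBinom (Nat.card K) (finrank K V) 1 := by
    simp [card_subspacesIcc]
  have hn := gaussBinom_pos hq (by omega : 1 ≤ finrank K V)
  have hdensity : ((Nat.card K : ℚ) - 2) / (Nat.card K - 1) ≤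
      1 - gaussBinom (Nat.card K) a 1 * gaussBinom (Nat.card K) b 1 /
        #(subspacesIcc (⊥ : Submodule K V) ⊤ 1) := by
    have : gaussBinom (Nat.card K) a 1 * gaussBinom (Nat.card K) b 1 /
        gaussBinom (Nat.card K) (finrank K V) 1 ≤ 1 / ((Nat.card K : ℚ) - 1) := by
      rw [div_le_iff₀ hn, one_div_mul_eq_div]
      exact gaussBinom_one_mul_gaussBinom_one_le hq hab
    have hsplit : ((Nat.card K : ℚ) - 2) / (Nat.card K - 1) = 1 - 1 / (Nat.card K - 1) := by
      rw [eq_sub_iff_add_eq, ← add_div, div_eq_one_iff_eq hpos.ne']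
      ring
    rw [hpoints, hsplit]
    linarith
  have hbound := (isTwoDesign_subspaces ha).card_mul_card_le_of_forall_exists
    (isTwoDesign_subspaces hb) (A := A) (C := B) (fun R hR ↦ by simp [hA R hR])
    (fun S hS ↦ by simp [hB S hS]) (div_nonneg (by linarith) hpos.le) hdensity
    fun R hR S hS ↦ exists_point_le_of_not_disjoint (h R hR S hS)
  rwa [div_pow, div_mul_eq_mul_div, div_le_iff₀' (by positivity)] at hbound

theorem card_le_of_forall_not_disjoint {A : Finset (Submodule K V)} {T : Submodule K V} {a : ℕ}
    (hA : ∀ R ∈ A, finrank K R = a) (hT : ∀ R ∈ A, ¬Disjoint R T) :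
    (#A : ℚ) ≤ gaussBinom (Nat.card K) (finrank K T) 1 *
      gaussBinom (Nat.card K) (finrank K V - 1) (a - 1) := by
  classical
  obtain rfl | ⟨R, hR⟩ := A.eq_empty_or_nonempty
  · simpa using mul_nonneg (gaussBinom_nonneg Finite.one_lt_card)
      (gaussBinom_nonneg Finite.one_lt_card)
  have ha : 1 ≤ a := by
    rw [← hA R hR, Submodule.one_le_finrank_iff]
    rintro rfl
    exact hT _ hR disjoint_bot_left
  have hcover : A ⊆ (subspacesIcc ⊥ T 1).biUnion fun x ↦ subspacesIcc x ⊤ a := by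
    intro R hR
    obtain ⟨x, hx, hxR, hxT⟩ := exists_point_le_of_not_disjoint (hT R hR)
    exact mem_biUnion.2 ⟨x, by simp [hxT, (mem_subspacesIcc.1 hx).2], by simp [hxR, hA R hR]⟩
  have hthrough (x) (hx : x ∈ subspacesIcc (⊥ : Submodule K V) T 1) :
      (#(subspacesIcc x ⊤ a) : ℚ) =
        gaussBinom (Nat.card K) (finrank K V - 1) (a - 1) := by
    have hx1 := (mem_subspacesIcc.1 hx).2
    rw [card_subspacesIcc le_top (hx1.trans_le ha), hx1, finrank_top]
  calc (#A : ℚ) ≤ ∑ x ∈ subspacesIcc ⊥ T 1, (#(subspacesIcc x ⊤ a) : ℚ) :=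
        mod_cast (card_le_card hcover).trans card_biUnion_le
    _ = _ := by
        rw [sum_congr rfl hthrough, sum_const, nsmul_eq_mul, card_subspacesIcc bot_le (by simp),
          finrank_bot, Nat.sub_zero, Nat.sub_zero]

end Subspaces

section Projection

variable {K V W : Type*} [Field K] [AddCommGroup V] [Module K V] [AddCommGroup W] [Module K W]

theorem finrank_map_add_finrank_inf_ker (f : V →ₗ[K] W) (R : Submodule K V)
    [FiniteDimensional K R] :
    finrank K (R.map f) + finrank K (R ⊓ LinearMap.ker f : Submodule K V) = finrank K R := by
  rw [← LinearMap.finrank_range_add_finrank_ker (f.domRestrict R), LinearMap.range_domRestrict,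
    LinearMap.ker_domRestrict, ← Submodule.map_comap_subtype,
    Submodule.finrank_map_subtype_eq]

theorem not_disjoint_map {f : V →ₗ[K] W} {R S : Submodule K V}
    (hS : Disjoint S (LinearMap.ker f)) (h : ¬Disjoint R S) : ¬Disjoint (R.map f) (S.map f) := by
  contrapose! h
  rw [Submodule.disjoint_def] at h ⊢
  exact fun v hvR hvS ↦ LinearMap.disjoint_ker.1 hS v hvS <|
    h _ (Submodule.mem_map_of_mem hvR) (Submodule.mem_map_of_mem hvS)

theorem exists_section_of_disjoint_ker {f : V →ₗ[K] W} {T : Submodule K V}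
    (hT : Disjoint T (LinearMap.ker f)) :
    ∃ σ : T.map f →ₗ[K] V, f ∘ₗ σ = (T.map f).subtype ∧ LinearMap.range σ = T := by
  have hinj : Function.Injective (f.domRestrict T) := LinearMap.injective_domRestrict_iff.2 hT
  rw [← LinearMap.range_domRestrict]
  let e := LinearEquiv.ofInjective _ hinj
  refine ⟨T.subtype ∘ₗ e.symm, ?_, ?_⟩
  · ext x
    exact congrArg Subtype.val (e.apply_symm_apply x)
  · rw [LinearMap.range_comp, LinearEquiv.range, Submodule.map_subtype_top]

theorem card_le_pow_of_map_eq [Finite K] [FiniteDimensional K V] {f : V →ₗ[K] W}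
    {X : Submodule K W} [FiniteDimensional K X] {Z : Finset (Submodule K V)}
    (hdisj : ∀ T ∈ Z, Disjoint T (LinearMap.ker f)) (hmap : ∀ T ∈ Z, T.map f = X) :
    #Z ≤ Nat.card K ^ (finrank K X * finrank K (LinearMap.ker f)) := by
  obtain rfl | ⟨T₀, hT₀⟩ := Z.eq_empty_or_nonempty
  · simp
  have hsection (T : Z) : ∃ σ : X →ₗ[K] V, f ∘ₗ σ = X.subtype ∧ LinearMap.range σ = T := by
    obtain rfl := hmap T T.2
    exact exists_section_of_disjoint_ker (hdisj T T.2)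
  choose σ hσ hrange using hsection
  let d (T : Z) : X →ₗ[K] LinearMap.ker f :=
    (σ T - σ ⟨T₀, hT₀⟩).codRestrict _ fun x ↦ by
      simpa [sub_eq_zero] using LinearMap.congr_fun ((hσ T).trans (hσ _).symm) x
  have hd : Function.Injective d := fun S T hST ↦ by
    have : σ S = σ T := by
      ext x
      simpa [d] using congrArg Subtype.val (LinearMap.congr_fun hST x)
    rw [Subtype.ext_iff, ← hrange, ← hrange, this]
  have := Module.finite_of_finite K (M := X →ₗ[K] LinearMap.ker f)
  calc #Z = Nat.card Z := by simp
    _ ≤ Nat.card (X →ₗ[K] LinearMap.ker f) := Nat.card_le_card_of_injective d hd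
    _ = _ := by rw [Module.natCard_eq_pow_finrank (K := K), Module.finrank_linearMap]

end Projection

section PointProjection

variable {K V : Type*} [Field K] [AddCommGroup V] [Module K V]

open scoped Classical in
theorem CrossIntersecting.image_map {W : Type*} [AddCommGroup W] [Module K W] {f : V →ₗ[K] W}
    {A Z : Finset (Submodule K V)} (h : CrossIntersecting A Z)
    (hZ : ∀ S ∈ Z, Disjoint S (LinearMap.ker f)) :
    CrossIntersecting (A.image (Submodule.map f)) (Z.image (Submodule.map f)) := by
  simp only [CrossIntersecting, forall_mem_image]
  exact fun R hR S hS ↦ not_disjoint_map (hZ S hS) (h R hR S hS)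

open scoped Classical in
theorem card_image_map_mkQ {p : Submodule K V} {A : Finset (Submodule K V)}
    (hA : ∀ R ∈ A, p ≤ R) : #(A.image (Submodule.map p.mkQ)) = #A := by
  refine card_image_of_injOn fun R hR S hS hRS ↦ ?_
  simpa [Submodule.comap_map_mkQ, hA R hR, hA S hS] using congrArg (Submodule.comap p.mkQ) hRS

theorem disjoint_of_not_le_of_finrank_eq_one {p S : Submodule K V} (hp : finrank K p = 1)
    (hpS : ¬p ≤ S) : Disjoint S p :=
  ((Submodule.isAtom_iff_finrank_eq_one.2 hp).not_le_iff_disjoint.1 hpS).symm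

variable [Module.Finite K V]

theorem finrank_map_mkQ_of_le {p R : Submodule K V} (hp : finrank K p = 1) (hpR : p ≤ R) :
    finrank K (R.map p.mkQ) + 1 = finrank K R := by
  rw [← finrank_map_add_finrank_inf_ker p.mkQ R, Submodule.ker_mkQ, inf_eq_right.2 hpR, hp]

theorem finrank_map_mkQ_of_disjoint {p S : Submodule K V} (hS : Disjoint S p) :
    finrank K (S.map p.mkQ) = finrank K S := by
  rw [← finrank_map_add_finrank_inf_ker p.mkQ S, Submodule.ker_mkQ, hS.eq_bot, finrank_bot,
    add_zero]

theorem finrank_quotient_of_finrank_eq_one {p : Submodule K V} (hp : finrank K p = 1) :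
    finrank K (V ⧸ p) = finrank K V - 1 := by
  have := p.finrank_quotient_add_finrank
  omega

variable [Finite K] {p T : Submodule K V} {A Z : Finset (Submodule K V)} {a b : ℕ}

open scoped Classical in
theorem card_le_pow_mul_card_image_map_mkQ (hp : finrank K p = 1)
    (hZp : ∀ S ∈ Z, ¬p ≤ S) (hZ : ∀ S ∈ Z, finrank K S = b) :
    #Z ≤ Nat.card K ^ b * #(Z.image (Submodule.map p.mkQ)) := by
  have hdisj (S) (hS : S ∈ Z) := disjoint_of_not_le_of_finrank_eq_one hp (hZp S hS)
  refine card_le_mul_card_image Z _ fun X hX ↦ ?_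
  obtain ⟨S, hS, rfl⟩ := mem_image.1 hX
  have hfiber := card_le_pow_of_map_eq (f := p.mkQ) (X := S.map p.mkQ)
    (Z := {T ∈ Z | T.map p.mkQ = S.map p.mkQ})
    (fun T hT ↦ by simpa using hdisj T (mem_filter.1 hT).1) fun T hT ↦ (mem_filter.1 hT).2
  rwa [finrank_map_mkQ_of_disjoint (hdisj S hS), hZ S hS, Submodule.ker_mkQ, hp, mul_one]
    at hfiber

theorem CrossIntersecting.card_mul_card_le_of_point (h : CrossIntersecting A Z)
    (hp : finrank K p = 1) (hAp : ∀ R ∈ A, p ≤ R) (hZp : ∀ S ∈ Z, ¬p ≤ S) (ha : 2 ≤ a)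
    (hb : 1 ≤ b) (hab : a + b ≤ finrank K V) (hA : ∀ R ∈ A, finrank K R = a)
    (hZ : ∀ S ∈ Z, finrank K S = b) :
    ((Nat.card K : ℚ) - 2) ^ 2 * (#A * #Z) ≤ ((Nat.card K : ℚ) - 1) ^ 2 *
      (gaussBinom (Nat.card K) (finrank K V - 2) (a - 2) *
        ((Nat.card K : ℚ) ^ b * gaussBinom (Nat.card K) (finrank K V - 2) (b - 1))) := by
  classical
  have hdisj (S) (hS : S ∈ Z) := disjoint_of_not_le_of_finrank_eq_one hp (hZp S hS)
  have hdim := finrank_quotient_of_finrank_eq_one hp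
  have hproj := (h.image_map (f := p.mkQ) (by simpa using hdisj)).card_mul_card_le (a := a - 1)
    (by omega) hb (by omega)
    (forall_mem_image.2 fun R hR ↦ by
      have := finrank_map_mkQ_of_le hp (hAp R hR)
      have := hA R hR
      omega)
    (forall_mem_image.2 fun S hS ↦ by rw [finrank_map_mkQ_of_disjoint (hdisj S hS), hZ S hS])
  rw [card_image_map_mkQ hAp, hdim, Nat.sub_sub, Nat.sub_sub] at hproj
  have hfiber : (#Z : ℚ) ≤ (Nat.card K : ℚ) ^ b * #(Z.image (Submodule.map p.mkQ)) :=
    mod_cast card_le_pow_mul_card_image_map_mkQ hp hZp hZ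
  calc ((Nat.card K : ℚ) - 2) ^ 2 * (#A * #Z)
      ≤ ((Nat.card K : ℚ) - 2) ^ 2 *
          (#A * ((Nat.card K : ℚ) ^ b * #(Z.image (Submodule.map p.mkQ)))) := by gcongr
    _ = (Nat.card K : ℚ) ^ b *
          (((Nat.card K : ℚ) - 2) ^ 2 * (#A * #(Z.image (Submodule.map p.mkQ)))) := by ring
    _ ≤ _ := by
      refine (mul_le_mul_of_nonneg_left hproj (by positivity)).trans_eq ?_
      ring

theorem card_le_of_point_of_forall_not_disjoint (hp : finrank K p = 1) (hAp : ∀ R ∈ A, p ≤ R)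
    (hA : ∀ R ∈ A, finrank K R = a) (hpT : ¬p ≤ T) (hT : ∀ R ∈ A, ¬Disjoint R T) :
    (#A : ℚ) ≤ gaussBinom (Nat.card K) (finrank K T) 1 *
      gaussBinom (Nat.card K) (finrank K V - 2) (a - 2) := by
  classical
  have hTp := disjoint_of_not_le_of_finrank_eq_one hp hpT
  have := card_le_of_forall_not_disjoint (A := A.image (Submodule.map p.mkQ))
    (T := T.map p.mkQ) (a := a - 1)
    (forall_mem_image.2 fun R hR ↦ by
      have := finrank_map_mkQ_of_le hp (hAp R hR)
      have := hA R hR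
      omega)
    (forall_mem_image.2 fun R hR ↦ not_disjoint_map (by simpa using hTp) (hT R hR))
  rwa [card_image_map_mkQ hAp, finrank_map_mkQ_of_disjoint hTp,
    finrank_quotient_of_finrank_eq_one hp, Nat.sub_sub, Nat.sub_sub] at this

end PointProjection

/-- The bound of `bad_point_bound` divided by `[2k-2 choose k-2]_q`, as a function of `q`,
`Q = q ^ k` and `N = [k choose 1]_q`. -/
def badPointThreshold (q Q N : ℚ) : ℚ :=
  q ^ 3 / Q * N + 1

section Threshold

variable {q Q N : ℚ}

theorem mul_sub_le_mul_of_le_of_le {c s α ζ : ℚ} (hα : 0 ≤ α) (hcα : c ≤ α) (hαs : α ≤ s - c)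
    (hs : s ≤ α + ζ) : c * (s - c) ≤ α * ζ := by
  calc c * (s - c) ≤ α * (s - α) := by nlinarith
    _ ≤ α * ζ := by gcongr; linarith

theorem sq_add_le_badPointThreshold (hq : 1 < q) (hQ : q ^ 5 ≤ Q) (hN : N * (q - 1) = Q - 1) :
    q ^ 2 + q + 2 ≤ badPointThreshold q Q N := by
  have hQ0 : 0 < Q := by nlinarith [pow_pos (by linarith : 0 < q) 5]
  have hqQ : q ^ 3 ≤ Q := (pow_le_pow_right₀ hq.le (by norm_num)).trans hQ
  suffices (q ^ 2 + q + 1) * Q ≤ q ^ 3 * N by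
    rw [badPointThreshold, div_mul_eq_mul_div, ← sub_le_iff_le_add, le_div_iff₀ hQ0]
    linarith
  refine le_of_mul_le_mul_right ?_ (by linarith : 0 < q - 1)
  linear_combination hqQ - q ^ 3 * hN

theorem badPointThreshold_le (hq : 1 < q) (hQ : q ^ 5 ≤ Q) (hN : N * (q - 1) = Q - 1) :
    badPointThreshold q Q N ≤ (q ^ 2 + 1) / q ^ 4 * N := by
  have hQ0 : 0 < Q := by nlinarith [pow_pos (by linarith : 0 < q) 5]
  have hN0 : q ^ 4 ≤ N := by
    refine le_of_mul_le_mul_right ?_ (by linarith : 0 < q - 1)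
    nlinarith [one_le_pow₀ hq.le (n := 4)]
  have hdiv : q ^ 3 / Q ≤ q ^ 2 / q ^ 4 := by
    rw [div_le_div_iff₀ hQ0 (by positivity)]
    nlinarith [mul_le_mul_of_nonneg_left hQ (sq_nonneg q)]
  have hone : 1 ≤ 1 / q ^ 4 * N := by rwa [one_div_mul_eq_div, one_le_div₀ (by positivity)]
  rw [badPointThreshold, add_div, add_mul]
  have : 0 ≤ N := (by positivity : 0 ≤ q ^ 4).trans hN0
  gcongr

theorem mul_div_sub_le (hq : 1 < q) (hQ : q ^ 5 ≤ Q) :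
    Q * q / (Q - q) ≤ q ^ 5 / (q ^ 4 - 1) := by
  have hq4 : 1 < q ^ 4 := one_lt_pow₀ hq (by norm_num)
  have hqQ : 0 < Q - q := by nlinarith
  rw [div_le_div_iff₀ hqQ (by linarith)]
  linear_combination q * hQ

theorem threshold_polynomial_lt (hq : 3 ≤ q) :
    (q - 1) ^ 3 * q ^ 9 <
      (q - 2) ^ 2 * (q ^ 2 + q + 2) * (q ^ 4 + 3 * q ^ 3 - q ^ 2 - 1) * (q ^ 4 - 1) := by
  obtain ⟨t, rfl⟩ : ∃ t, q = t + 3 := ⟨q - 3, by ring⟩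
  have ht : 0 ≤ t := by linarith
  rw [← sub_pos]
  ring_nf
  positivity

theorem mul_div_le_sub_badPointThreshold (hq : 1 < q) (hQ : q ^ 5 ≤ Q) (hN : N * (q - 1) = Q - 1) :
    N * (q ^ 4 + 3 * q ^ 3 - q ^ 2 - 1) / q ^ 4 ≤ (1 + 3 / q) * N - badPointThreshold q Q N := by
  calc N * (q ^ 4 + 3 * q ^ 3 - q ^ 2 - 1) / q ^ 4
      = (1 + 3 / q) * N - (q ^ 2 + 1) / q ^ 4 * N := by field_simp; ring
    _ ≤ _ := by gcongr; exact badPointThreshold_le hq hQ hN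

theorem le_badPointThreshold_of_mul_le (hq : 3 ≤ q) (hQ : q ^ 5 ≤ Q) (hN : N * (q - 1) = Q - 1)
    {α ζ : ℚ} (hα : 0 ≤ α) (hαN : α ≤ N) (hsum : (1 + 3 / q) * N ≤ α + ζ)
    (hmul : (q - 2) ^ 2 * (α * ζ) ≤ (q - 1) ^ 3 * N * (Q * q / (Q - q))) :
    α ≤ badPointThreshold q Q N := by
  by_contra! hcα
  have hq1 : 1 < q := by linarith
  have hc := sq_add_le_badPointThreshold hq1 hQ hN
  have hgap := mul_div_le_sub_badPointThreshold hq1 hQ hN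
  set c := badPointThreshold q Q N
  set d := q ^ 4 + 3 * q ^ 3 - q ^ 2 - 1 with hd
  have hN0 : 0 < N := by nlinarith
  have hqd : q ^ 4 ≤ d := by nlinarith [pow_pos (by linarith : 0 < q) 3]
  have hNd : N ≤ N * d / q ^ 4 := by rw [le_div_iff₀ (by positivity)]; gcongr
  have hd0 : 0 ≤ d := le_trans (by positivity) hqd
  have hq4 : 0 < q ^ 4 - 1 := sub_pos.2 (one_lt_pow₀ hq1 (by norm_num))
  have hmin : c * ((1 + 3 / q) * N - c) ≤ α * ζ :=
    mul_sub_le_mul_of_le_of_le hα hcα.le (hαN.trans (hNd.trans hgap)) hsum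
  have hchain : (q - 2) ^ 2 * ((q ^ 2 + q + 2) * (N * d / q ^ 4)) ≤
      (q - 1) ^ 3 * N * (q ^ 5 / (q ^ 4 - 1)) := by
    have : 0 ≤ q - 1 := by linarith
    have hc0 : 0 ≤ c := le_trans (by positivity) hc
    calc _ ≤ (q - 2) ^ 2 * (c * ((1 + 3 / q) * N - c)) := by gcongr
      _ ≤ (q - 2) ^ 2 * (α * ζ) := by gcongr
      _ ≤ (q - 1) ^ 3 * N * (Q * q / (Q - q)) := hmul
      _ ≤ _ := by gcongr _ * ?_; exact mul_div_sub_le hq1 hQ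
  refine hchain.not_gt ?_
  have hpoly := threshold_polynomial_lt hq
  rw [← hd] at hpoly
  field_simp
  linarith

end Threshold

section BadPoint

variable {K V : Type*} [Field K] [AddCommGroup V] [Module K V]

theorem CrossIntersecting.card_le_badPointThreshold_mul [Finite K] {k : ℕ} {p : Submodule K V}
    {A Z : Finset (Submodule K V)} (h : CrossIntersecting A Z) (hq : 3 ≤ Nat.card K) (hk : 5 ≤ k)
    (hV : finrank K V = 2 * k) (hp : finrank K p = 1) (hAp : ∀ R ∈ A, p ≤ R)
    (hZp : ∀ S ∈ Z, ¬p ≤ S) (hA : ∀ R ∈ A, finrank K R = k) (hZ : ∀ S ∈ Z, finrank K S = k)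
    (hZ0 : Z.Nonempty)
    (hsize : (1 + 3 / (Nat.card K : ℚ)) * gaussBinom (Nat.card K) k 1 *
      gaussBinom (Nat.card K) (2 * k - 2) (k - 2) ≤ #A + #Z) :
    (#A : ℚ) ≤ badPointThreshold (Nat.card K) (Nat.card K ^ k) (gaussBinom (Nat.card K) k 1) *
      gaussBinom (Nat.card K) (2 * k - 2) (k - 2) := by
  have : Module.Finite K V := Module.finite_of_finrank_pos (by omega)
  have hmul := h.card_mul_card_le_of_point hp hAp hZp (by omega) (by omega) (by omega) hA hZ
  obtain ⟨T, hT⟩ := hZ0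
  have hA' := card_le_of_point_of_forall_not_disjoint hp hAp hA (hZp T hT) fun R hR ↦ h R hR T hT
  rw [hZ T hT, hV] at hA'
  rw [hV] at hmul
  generalize Nat.card K = q at *
  have hG : 0 < gaussBinom q (2 * k - 2) (k - 2) := gaussBinom_pos (by omega) (by omega)
  have hident := pow_mul_gaussBinom_two_mul_sub_two (by omega : 1 < q) (by omega : 2 ≤ k)
  have hq3 : (3 : ℚ) ≤ q := mod_cast hq
  have hN : gaussBinom q k 1 * ((q : ℚ) - 1) = (q : ℚ) ^ k - 1 := by
    rw [gaussBinom_one_right, div_mul_cancel₀ _ (by linarith)]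
  set G := gaussBinom q (2 * k - 2) (k - 2)
  rw [← div_le_iff₀ hG]
  refine le_badPointThreshold_of_mul_le (ζ := #Z / G) hq3 (pow_le_pow_right₀ (by linarith) hk) hN
    (by positivity) ((div_le_iff₀ hG).2 hA') ?_ ?_
  · rwa [← add_div, le_div_iff₀ hG]
  · rw [div_mul_div_comm, mul_div_assoc', div_le_iff₀ (by positivity)]
    linear_combination hmul + ((q : ℚ) - 1) ^ 2 * G * hident

theorem bad_point_bound_general {q k : ℕ} (hq : 3 ≤ q) (hk : 5 ≤ k) (hK : Nat.card K = q)
    (hV : finrank K V = 2 * k) {Y : Set (Submodule K V)} (hdim : ∀ R ∈ Y, finrank K R = k)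
    (hint : ∀ R ∈ Y, ∀ S ∈ Y, R ⊓ S ≠ ⊥)
    (hsize : (1 + 3 / (q : ℚ)) * gaussBinom q k 1 * gaussBinom q (2 * k - 2) (k - 2) ≤ Nat.card Y)
    {p : Submodule K V} (hp : finrank K p = 1) (hdict : ∃ T ∈ Y, ¬p ≤ T) :
    (Nat.card {R : Submodule K V // R ∈ Y ∧ p ≤ R} : ℚ) ≤
      ((q : ℚ) ^ 3 / (q : ℚ) ^ k * gaussBinom q k 1 + 1) * gaussBinom q (2 * k - 2) (k - 2) := by
  classical
  subst hK
  have : Finite K := Nat.finite_of_card_ne_zero (by omega)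
  have : Module.Finite K V := Module.finite_of_finrank_pos (by omega)
  have : Finite V := Module.finite_of_finite K
  lift Y to Finset (Submodule K V) using Y.toFinite
  have hA : Nat.card {R // R ∈ (Y : Set (Submodule K V)) ∧ p ≤ R} = #{R ∈ Y | p ≤ R} := by
    rw [← Nat.card_eq_finsetCard]
    simp
  have hcross : CrossIntersecting {R ∈ Y | p ≤ R} {R ∈ Y | ¬p ≤ R} := fun R hR S hS ↦
    mt disjoint_iff.1 (hint R (mem_filter.1 hR).1 S (mem_filter.1 hS).1)
  rw [hA]
  refine hcross.card_le_badPointThreshold_mul hq hk hV hp (by simp) (by simp)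
    (fun R hR ↦ hdim R (mem_filter.1 hR).1) (fun R hR ↦ hdim R (mem_filter.1 hR).1)
    (filter_nonempty_iff.2 hdict) ?_
  have := card_filter_add_card_filter_not (s := Y) (p ≤ ·)
  rw [← Nat.cast_add, this]
  simpa using hsize

end BadPoint

/-- Lemma 3.3 (bad point bound): for `q ≥ 3`, `k ≥ 5`, if `Y` is an intersecting family of
`k`-spaces of `F_q^{2k}` of size at least `(1 + 3q^{-1})·[k choose 1]_q·[2k-2 choose k-2]_q`
which is not contained in a dictator nor in the dual of a dictator, then no point lies in
more than `(q^{3-k}·[k choose 1]_q + 1)·[2k-2 choose k-2]_q` members of `Y`. -/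
theorem bad_point_bound (q k : ℕ) (hq3 : 3 ≤ q) (hq : IsPrimePow q) (hk : 5 ≤ k)
    (F : Type) [Field F] [Fintype F] (hF : Fintype.card F = q)
    (Y : Set (Submodule F (Fin (2 * k) → F)))
    (hdim : ∀ R ∈ Y, Module.finrank F R = k)
    (hint : ∀ R ∈ Y, ∀ S ∈ Y, R ⊓ S ≠ ⊥)
    (hsize : (Nat.card Y : ℚ) ≥ (1 + 3 / (q : ℚ)) * gaussBinom q k 1 * gaussBinom q (2 * k - 2) (k - 2))
    (hdict : ¬ ∃ p : Submodule F (Fin (2 * k) → F), Module.finrank F p = 1 ∧ ∀ R ∈ Y, p ≤ R)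
    (hdual : ¬ ∃ H : Submodule F (Fin (2 * k) → F), Module.finrank F H = 2 * k - 1 ∧ ∀ R ∈ Y, R ≤ H) :
    ∀ p : Submodule F (Fin (2 * k) → F), Module.finrank F p = 1 →
      (Nat.card {R : Submodule F (Fin (2 * k) → F) // R ∈ Y ∧ p ≤ R} : ℚ) ≤
        ((q : ℚ) ^ 3 / (q : ℚ) ^ k * gaussBinom q k 1 + 1) * gaussBinom q (2 * k - 2) (k - 2) := by
  intro p hp
  push Not at hdict
  exact bad_point_bound_general hq3 hk (by rw [Nat.card_eq_fintype_card, hF]) (by simp) hdim hint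
    hsize hp (hdict p hp)
end
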